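/- arXiv:1805.06581 — 3 statements merged into one kernel-verified Lean document; each statement's English description precedes it below -/
import Mathlib

section
/- An element w of a Coxeter group W is fully commutative if and only if no reduced word of w contains a contiguous subword sts⋯ of length m(s,t) for generators s,t with m(s,t) ≥ 3. -/
open CoxeterSystem

/-- Two words differ by a single commutation move: swapping two adjacent commuting letters. -/
def CommStep {B : Type*} (M : CoxeterMatrix B) (l l' : List B) : Prop :=
  ∃ (u v : List B) (a b : B), M a b = 2 ∧ l = u ++ a :: b :: v ∧ l' = u ++ b :: a :: v

/-- Two words are related by a sequence of commutation moves. -/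
def CommEquiv {B : Type*} (M : CoxeterMatrix B) : List B → List B → Prop :=
  Relation.ReflTransGen fun l l' => CommStep M l l' ∨ CommStep M l' l

/-- An element is fully commutative if any two of its reduced words are related by
commutation moves alone. -/
def FullyCommutative {B W : Type*} [Group W] {M : CoxeterMatrix B}
    (cs : CoxeterSystem M W) (w : W) : Prop :=
  ∀ l l', cs.IsReduced l → cs.wordProd l = w → cs.IsReduced l' → cs.wordProd l' = w →
    CommEquiv M l l'

namespace CoxeterMatrix

variable {B : Type*} (M : CoxeterMatrix B)

/-- The linear form `2⟨e i, ·⟩` of the geometric representation: its value at the `j`-th basis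
vector is `-2 cos (π / m(i,j))`, which is `-2` if `m(i,j)` is infinite. -/
noncomputable def simpleCoroot (i : B) : Module.Dual ℝ (B →₀ ℝ) :=
  Finsupp.linearCombination ℝ fun j ↦ -(2 * Real.cos (Real.pi / M i j))

@[simp]
theorem simpleCoroot_single (i j : B) :
    M.simpleCoroot i (Finsupp.single j 1) = -(2 * Real.cos (Real.pi / M i j)) := by
  simp [simpleCoroot]

theorem simpleCoroot_single_self (i : B) : M.simpleCoroot i (Finsupp.single i 1) = 2 := by
  simp

/-- The reflection by which the simple generator `i` acts in the geometric representation. -/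
noncomputable def simpleReflection (i : B) : (B →₀ ℝ) ≃ₗ[ℝ] (B →₀ ℝ) :=
  Module.reflection (M.simpleCoroot_single_self i)

theorem simpleCoroot_mul_simpleCoroot_sub_two (i j : B) :
    2 * Real.cos (2 * Real.pi / M i j) = M.simpleCoroot i (Finsupp.single j 1) *
      M.simpleCoroot j (Finsupp.single i 1) - 2 := by
  rw [simpleCoroot_single, simpleCoroot_single, M.symmetric j i, mul_div_assoc, Real.cos_two_mul]
  ring

end CoxeterMatrix

theorem Polynomial.Chebyshev.S_eval_two_mul_cos_mul_sin (θ : ℝ) (n : ℤ) :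
    (S ℝ n).eval (2 * Real.cos θ) * Real.sin θ = Real.sin ((n + 1) * θ) := by
  rw [← U_real_cos, ← S_comp_two_mul_X]
  simp

theorem Real.sin_two_pi_div_pos {m : ℕ} (hm : 3 ≤ m) : 0 < Real.sin (2 * Real.pi / m) := by
  have hm' : (3 : ℝ) ≤ m := mod_cast hm
  have := Real.pi_pos
  apply Real.sin_pos_of_pos_of_lt_pi
  · positivity
  · rw [div_lt_iff₀ (by positivity)]
    nlinarith

namespace CoxeterMatrix

open Polynomial Polynomial.Chebyshev

variable {B : Type*} (M : CoxeterMatrix B)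

theorem isLiftable_simpleReflection : M.IsLiftable M.simpleReflection := by
  intro i j
  ext1 z
  have key := Module.reflection_mul_reflection_pow_apply (M.simpleCoroot_single_self i)
    (M.simpleCoroot_single_self j) (M i j) z _ (M.simpleCoroot_mul_simpleCoroot_sub_two i j)
  change _ = z
  refine key.trans ?_
  clear key
  have hS := S_eval_two_mul_cos_mul_sin (2 * Real.pi / M i j)
  obtain hm | hm | hm | hm : M i j = 0 ∨ M i j = 1 ∨ M i j = 2 ∨ 3 ≤ M i j := by lia
  · simp [hm]
  · obtain rfl : i = j := by_contra fun h ↦ M.off_diagonal i j h hm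
    simp [two_mul]
  · simp [hm, M.symmetric j i]
    module
  · have hsin := (Real.sin_two_pi_div_pos hm).ne'
    have hm0 : (M i j : ℝ) ≠ 0 := by positivity
    generalize hθ : 2 * Real.pi / M i j = θ at *
    have hmθ : M i j * θ = 2 * Real.pi := by rw [← hθ]; field_simp
    obtain ⟨k, hk | hk⟩ := Nat.even_or_odd' (M i j)
    · have h0 : (S ℝ ((k : ℤ) - 1)).eval (2 * Real.cos θ) = 0 := by
        apply (mul_eq_zero.1 ((hS _).trans _)).resolve_right hsin
        rw [hk] at hmθ
        push_cast at hmθ ⊢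
        rw [show ((k : ℝ) - 1 + 1) * θ = Real.pi by linarith, Real.sin_pi]
      have e1 : (((M i j : ℕ) : ℤ) - 2) / 2 = k - 1 := by lia
      have e2 : (((M i j : ℕ) : ℤ) - 1) / 2 = k - 1 := by lia
      rw [e1, e2, h0]
      simp
    · have h0 : (S ℝ (k : ℤ)).eval (2 * Real.cos θ) +
          (S ℝ ((k : ℤ) - 1)).eval (2 * Real.cos θ) = 0 := by
        have h1 := hS k
        have h2 := hS (k - 1)
        rw [hk] at hmθ
        push_cast at hmθ h1 h2
        rw [show ((k : ℝ) + 1) * θ = 2 * Real.pi - k * θ by linarith, Real.sin_two_pi_sub] at h1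
        rw [sub_add_cancel] at h2
        apply (mul_eq_zero.1 _).resolve_right hsin
        linarith
      have e1 : (((M i j : ℕ) : ℤ) - 2) / 2 = k - 1 := by lia
      have e2 : (((M i j : ℕ) : ℤ) - 1) / 2 = k := by lia
      have e3 : (((M i j : ℕ) : ℤ) - 3) / 2 = k - 1 := by lia
      have e4 : ((M i j : ℕ) : ℤ) / 2 = k := by lia
      rw [e1, e2, e3, e4, h0]
      simp

theorem simpleReflection_mul_pow_ne_one {i j : B} (hij : i ≠ j) {k : ℕ} (hk : 0 < k)
    (hkm : M i j = 0 ∨ k < M i j) : (M.simpleReflection i * M.simpleReflection j) ^ k ≠ 1 := by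
  intro h
  have key := Module.reflection_mul_reflection_pow_apply_self (M.simpleCoroot_single_self i)
    (M.simpleCoroot_single_self j) k _ (M.simpleCoroot_mul_simpleCoroot_sub_two i j)
  have h' : ((M.simpleReflection i * M.simpleReflection j) ^ k) (Finsupp.single i 1) =
      Finsupp.single i 1 := by rw [h]; rfl
  have hv := h'.symm.trans key
  have hi := DFunLike.congr_fun hv i
  have hj := DFunLike.congr_fun hv j
  simp only [Finsupp.add_apply, Finsupp.smul_apply, Finsupp.single_eq_same,
    Finsupp.single_eq_of_ne hij, Finsupp.single_eq_of_ne hij.symm,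
    simpleCoroot_single, smul_eq_mul, mul_one, mul_zero, add_zero, zero_add,
    M.symmetric j i, neg_neg] at hi hj
  have hS := S_eval_two_mul_cos_mul_sin (2 * Real.pi / M i j)
  obtain hm | hm | hm | hm : M i j = 0 ∨ M i j = 1 ∨ M i j = 2 ∨ 3 ≤ M i j := by lia
  · simp [hm, S_eval_two] at hj
    lia
  · lia
  · obtain rfl : k = 1 := by lia
    simp [hm] at hi
  · have hsin := (Real.sin_two_pi_div_pos hm).ne'
    have hm3 : (3 : ℝ) ≤ M i j := mod_cast hm
    have hm0 : (M i j : ℝ) ≠ 0 := by positivity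
    have hcos : 0 < Real.cos (Real.pi / M i j) := by
      apply Real.cos_pos_of_mem_Ioo
      have := Real.pi_pos
      constructor
      · have : 0 < Real.pi / M i j := by positivity
        linarith
      · gcongr; linarith
    have h0 := (mul_eq_zero.1 hj.symm).resolve_right (by positivity)
    have h1 := hS k
    have h2 := hS (k - 1)
    rw [h0, add_zero] at hi
    rw [← hi, one_mul] at h1
    rw [h0, zero_mul] at h2
    generalize hθ : 2 * Real.pi / M i j = θ at *
    have hmθ : M i j * θ = 2 * Real.pi := by rw [← hθ]; field_simp
    push_cast at h1 h2
    rw [sub_add_cancel, eq_comm, Real.sin_eq_zero_iff] at h2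
    obtain ⟨n, hn⟩ := h2
    have hnm : n * (M i j : ℤ) = 2 * k := by
      have : (n : ℝ) * M i j = 2 * k := by
        apply mul_right_cancel₀ Real.pi_ne_zero
        linear_combination (M i j : ℝ) * hn + (k : ℝ) * hmθ
      exact_mod_cast this
    obtain rfl : n = 1 := by
      have : k < M i j := by lia
      have h1 : 0 < n := by nlinarith
      have h2 : n < 2 := by nlinarith
      lia
    rw [add_mul, ← hn, one_mul, Int.cast_one, one_mul, add_comm, Real.sin_add_pi] at h1
    apply hsin
    linarith

end CoxeterMatrix

namespace CoxeterSystem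

variable {B W : Type*} [Group W] {M : CoxeterMatrix B} (cs : CoxeterSystem M W)

theorem simple_mul_simple_pow_ne_one {i j : B} (hij : i ≠ j) {k : ℕ} (hk : 0 < k)
    (hkm : M i j = 0 ∨ k < M i j) : (cs.simple i * cs.simple j) ^ k ≠ 1 := by
  intro h
  apply M.simpleReflection_mul_pow_ne_one hij hk hkm
  have := congr_arg (cs.lift ⟨_, M.isLiftable_simpleReflection⟩) h
  simpa using this

section Parity

open Classical in
/-- The action of the simple generator `i` on pairs of a group element and a sign: it conjugates the
group element by `i`, and flips the sign if that element is the generator `i` itself. -/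
noncomputable def signedConj (i : B) : Function.End (W × ZMod 2) := fun p ↦
  (cs.simple i * p.1 * cs.simple i, p.2 + if p.1 = cs.simple i then 1 else 0)

open Classical in
theorem signedConj_mul_pow_apply (i j : B) (n : ℕ) (t : W) (e : ZMod 2) :
    ((cs.signedConj i * cs.signedConj j) ^ n) (t, e) =
      ((cs.simple i * cs.simple j) ^ n * t * (cs.simple j * cs.simple i) ^ n,
        e + ∑ r ∈ Finset.range (2 * n),
          if t = (cs.simple j * cs.simple i) ^ r * cs.simple j then 1 else 0) := by
  induction n with
  | zero =>
    change (t, e) = _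
    simp
  | succ n ih =>
    have hinv : (cs.simple i * cs.simple j) ^ n = ((cs.simple j * cs.simple i) ^ n)⁻¹ := by
      rw [← inv_pow]; simp
    have hsemi : cs.simple j * (cs.simple i * cs.simple j) ^ n =
        (cs.simple j * cs.simple i) ^ n * cs.simple j :=
      (SemiconjBy.pow_right (mul_assoc _ _ _).symm n).eq
    rw [pow_succ']
    change cs.signedConj i (cs.signedConj j (((cs.signedConj i * cs.signedConj j) ^ n) (t, e))) = _
    rw [ih, show 2 * (n + 1) = 2 * n + 1 + 1 by ring, Finset.sum_range_succ,
      Finset.sum_range_succ]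
    rw [hinv] at hsemi ⊢
    have hj : ((cs.simple j * cs.simple i) ^ n)⁻¹ * t * (cs.simple j * cs.simple i) ^ n =
        cs.simple j ↔ t = (cs.simple j * cs.simple i) ^ (2 * n) * cs.simple j := by
      rw [mul_assoc, inv_mul_eq_iff_eq_mul, ← eq_mul_inv_iff_mul_eq, mul_assoc, hsemi, two_mul,
        pow_add, mul_assoc]
    have hi : cs.simple j * (((cs.simple j * cs.simple i) ^ n)⁻¹ * t *
        (cs.simple j * cs.simple i) ^ n) * cs.simple j = cs.simple i ↔
        t = (cs.simple j * cs.simple i) ^ (2 * n + 1) * cs.simple j := by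
      rw [← eq_mul_inv_iff_mul_eq, ← eq_inv_mul_iff_mul_eq, inv_simple, mul_assoc,
        inv_mul_eq_iff_eq_mul, ← eq_mul_inv_iff_mul_eq, ← mul_assoc (cs.simple j), mul_assoc,
        mul_assoc, hsemi, two_mul, add_right_comm, pow_add, pow_succ]
      simp only [mul_assoc]
    ext
    · simp only [signedConj]
      rw [pow_succ', hinv, pow_succ]
      simp only [mul_assoc]
    · simp only [signedConj, hi, hj, add_assoc]

theorem isLiftable_signedConj : M.IsLiftable cs.signedConj := by
  classical
  intro i j
  funext p
  obtain ⟨t, e⟩ := p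
  rw [signedConj_mul_pow_apply, simple_mul_simple_pow, simple_mul_simple_pow', two_mul,
    Finset.sum_range_add]
  change _ = (t, e)
  simp [pow_add, CharTwo.add_self_eq_zero]

theorem lift_signedConj_wordProd [DecidableEq W] (ω : List B) (t : W) (e : ZMod 2) :
    cs.lift ⟨_, cs.isLiftable_signedConj⟩ (cs.wordProd ω) (t, e) =
      (cs.wordProd ω * t * (cs.wordProd ω)⁻¹, e + (cs.rightInvSeq ω).count t) := by
  induction ω with
  | nil =>
    rw [wordProd_nil, map_one]
    change (t, e) = _
    simp
  | cons i ω ih =>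
    rw [wordProd_cons, map_mul, lift_apply_simple]
    change cs.signedConj i (cs.lift ⟨_, cs.isLiftable_signedConj⟩ (cs.wordProd ω) (t, e)) = _
    rw [ih]
    simp only [signedConj, rightInvSeq, List.count_cons]
    ext
    · simp [mul_assoc]
    · have : cs.wordProd ω * t * (cs.wordProd ω)⁻¹ = cs.simple i ↔
          (cs.wordProd ω)⁻¹ * cs.simple i * cs.wordProd ω = t := by
        rw [mul_inv_eq_iff_eq_mul, mul_assoc, inv_mul_eq_iff_eq_mul, eq_comm]
      simp [this, add_assoc]

theorem count_rightInvSeq_eq_of_wordProd_eq [DecidableEq W] {ω ω' : List B}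
    (h : cs.wordProd ω = cs.wordProd ω') (t : W) :
    ((cs.rightInvSeq ω).count t : ZMod 2) = (cs.rightInvSeq ω').count t := by
  have h1 := cs.lift_signedConj_wordProd ω t 0
  rw [h, lift_signedConj_wordProd] at h1
  simpa using (congr_arg Prod.snd h1).symm

theorem IsRightDescent.exists_isReduced_concat {cs : CoxeterSystem M W} {w : W} {i : B}
    (h : cs.IsRightDescent w i) :
    ∃ ω, cs.IsReduced (ω ++ [i]) ∧ cs.wordProd (ω ++ [i]) = w := by
  obtain ⟨ω, hω, hw⟩ := cs.exists_isReduced (w * cs.simple i)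
  have hp : cs.wordProd (ω ++ [i]) = w := by simp [wordProd_append, ← hw]
  refine ⟨ω, ?_, hp⟩
  rw [IsReduced, hp, ← cs.isRightDescent_iff.1 h, hw, hω.eq]
  simp

/-- The exchange property. -/
theorem IsRightDescent.simple_mem_rightInvSeq {cs : CoxeterSystem M W} {ω : List B} {i : B}
    (h : cs.IsRightDescent (cs.wordProd ω) i) : cs.simple i ∈ cs.rightInvSeq ω := by
  classical
  obtain ⟨ω', hred, hprod⟩ := h.exists_isReduced_concat
  have hcount := cs.count_rightInvSeq_eq_of_wordProd_eq hprod (cs.simple i)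
  have hmem : cs.simple i ∈ cs.rightInvSeq (ω' ++ [i]) := by
    rw [← List.concat_eq_append, rightInvSeq_concat]
    simp
  rw [List.count_eq_one_of_mem hred.nodup_rightInvSeq hmem] at hcount
  by_contra hnot
  simp [List.count_eq_zero_of_not_mem hnot] at hcount

end Parity

theorem rightInvSeq_append (ω ω' : List B) :
    cs.rightInvSeq (ω ++ ω') =
      (cs.rightInvSeq ω).map (fun t ↦ (cs.wordProd ω')⁻¹ * t * cs.wordProd ω') ++
        cs.rightInvSeq ω' := by
  induction ω with
  | nil => simp
  | cons i ω ih => simp [rightInvSeq, ih, wordProd_append, mul_assoc]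

theorem exists_pow_of_mem_rightInvSeq_alternatingWord {i j : B} {k : ℕ} {t : W}
    (ht : t ∈ cs.rightInvSeq (alternatingWord i j k)) :
    ∃ r < k, t = (cs.simple j * cs.simple i) ^ r * cs.simple j := by
  induction k generalizing i j t with
  | zero => simp [alternatingWord] at ht
  | succ k ih =>
    rw [alternatingWord_succ, rightInvSeq_concat, List.concat_eq_append, List.mem_append,
      List.mem_map, List.mem_singleton] at ht
    obtain ⟨u, hu, rfl⟩ | rfl := ht
    · obtain ⟨r, hr, rfl⟩ := ih hu
      refine ⟨r + 1, by lia, ?_⟩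
      have hsemi : cs.simple j * (cs.simple i * cs.simple j) ^ r =
          (cs.simple j * cs.simple i) ^ r * cs.simple j :=
        (SemiconjBy.pow_right (mul_assoc _ _ _).symm r).eq
      rw [MulAut.conj_apply, inv_simple, ← mul_assoc, hsemi, pow_succ]
      simp only [mul_assoc]
    · exact ⟨0, by simp⟩

theorem IsReduced.of_wordProd_eq {cs : CoxeterSystem M W} {ω ω' : List B} (h : cs.IsReduced ω)
    (hprod : cs.wordProd ω' = cs.wordProd ω) (hlen : ω'.length = ω.length) :
    cs.IsReduced ω' := by
  rw [IsReduced, hprod, hlen, h.eq]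

/-- An element with right descents `i ≠ j` has reduced words ending in alternating words in `i` and
`j` of every length up to `m(i,j)`. -/
theorem exists_isReduced_append_alternatingWord {w : W} {i j : B} (hij : i ≠ j)
    (hi : cs.IsRightDescent w i) (hj : cs.IsRightDescent w j) {k : ℕ}
    (hk : M i j = 0 ∨ k ≤ M i j) :
    ∃ ω, cs.IsReduced (ω ++ alternatingWord i j k) ∧
      cs.wordProd (ω ++ alternatingWord i j k) = w := by
  induction k generalizing i j with
  | zero =>
    obtain ⟨ω, hω, hw⟩ := cs.exists_isReduced w
    exact ⟨ω, by simpa [alternatingWord], by simpa [alternatingWord] using hw.symm⟩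
  | succ k ih =>
    obtain ⟨ω, hω, rfl⟩ := ih hij.symm hj hi (by rw [M.symmetric]; lia)
    have hmem := hj.simple_mem_rightInvSeq
    rw [rightInvSeq_append, List.mem_append, List.mem_map] at hmem
    obtain ⟨t, ht, htj⟩ | hmem := hmem
    · obtain ⟨n, hn, rfl⟩ := List.mem_iff_getElem.1 ht
      have herase := cs.wordProd_mul_getD_rightInvSeq ω n
      rw [List.getD_eq_getElem _ _ hn] at herase
      have hprod : cs.wordProd (ω.eraseIdx n ++ alternatingWord i j (k + 1)) =
          cs.wordProd (ω ++ alternatingWord j i k) := by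
        rw [alternatingWord_succ, wordProd_append, wordProd_concat, ← herase, ← htj,
          wordProd_append]
        have hself := (cs.isReflection_of_mem_rightInvSeq ω ht).mul_self
        simp [mul_assoc, ← mul_assoc (cs.rightInvSeq ω)[n], hself]
      refine ⟨ω.eraseIdx n, hω.of_wordProd_eq hprod ?_, hprod⟩
      rw [length_rightInvSeq] at hn
      have := List.length_eraseIdx_add_one hn
      simp
      lia
    · obtain ⟨r, hr, hrj⟩ := cs.exists_pow_of_mem_rightInvSeq_alternatingWord hmem
      refine absurd ?_ (cs.simple_mul_simple_pow_ne_one hij r.succ_pos (by lia))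
      rw [pow_succ, ← mul_assoc, ← hrj, simple_mul_simple_self]

theorem wordProd_alternatingWord_comm (i j : B) :
    cs.wordProd (alternatingWord i j (M i j)) = cs.wordProd (alternatingWord j i (M i j)) := by
  have := cs.wordProd_braidWord_eq i j
  rwa [braidWord, braidWord, M.symmetric j i] at this

end CoxeterSystem

theorem CommEquiv.append_right {B : Type*} {M : CoxeterMatrix B} {l l' : List B}
    (h : CommEquiv M l l') (x : List B) : CommEquiv M (l ++ x) (l' ++ x) := by
  have hstep : ∀ {l l' : List B}, CommStep M l l' → CommStep M (l ++ x) (l' ++ x) := by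
    rintro _ _ ⟨u, v, a, b, hab, rfl, rfl⟩
    exact ⟨u, v ++ x, a, b, hab, by simp, by simp⟩
  induction h with
  | refl => exact .refl
  | tail _ h ih => exact ih.tail (h.imp hstep hstep)

theorem CommStep.filter_eq {B : Type*} [DecidableEq B] {M : CoxeterMatrix B} {i j : B}
    (hij : M i j ≠ 2) {l l' : List B} (h : CommStep M l l') :
    l.filter (fun x ↦ x = i ∨ x = j) = l'.filter (fun x ↦ x = i ∨ x = j) := by
  obtain ⟨u, v, a, b, hab, rfl, rfl⟩ := h
  have hne : a ≠ b := by rintro rfl; simp at hab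
  have := M.symmetric i j
  have : ¬ ((a = i ∨ a = j) ∧ (b = i ∨ b = j)) := by grind
  grind

theorem CommEquiv.filter_eq {B : Type*} [DecidableEq B] {M : CoxeterMatrix B} {i j : B}
    (hij : M i j ≠ 2) {l l' : List B} (h : CommEquiv M l l') :
    l.filter (fun x ↦ x = i ∨ x = j) = l'.filter (fun x ↦ x = i ∨ x = j) := by
  induction h with
  | refl => rfl
  | tail _ h ih => exact ih.trans (h.elim (·.filter_eq hij) (·.filter_eq hij |>.symm))

theorem CoxeterSystem.mem_alternatingWord {B : Type*} {i j x : B} {k : ℕ}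
    (h : x ∈ alternatingWord i j k) : x = i ∨ x = j := by
  induction k generalizing i j with
  | zero => simp [alternatingWord] at h
  | succ k ih =>
    rw [alternatingWord_succ, List.concat_eq_append, List.mem_append, List.mem_singleton] at h
    exact h.elim (fun h ↦ (ih h).symm) Or.inr

theorem not_commEquiv_alternatingWord {B : Type*} {M : CoxeterMatrix B} {i j : B}
    (hij : 3 ≤ M i j) (u v : List B) :
    ¬ CommEquiv M (u ++ alternatingWord i j (M i j) ++ v)
      (u ++ alternatingWord j i (M i j) ++ v) := by
  classical
  intro h
  have hfilter := h.filter_eq (i := i) (j := j) (by lia)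
  have h1 : ∀ k, (alternatingWord i j k).filter (fun x ↦ x = i ∨ x = j) = alternatingWord i j k :=
    fun k ↦ List.filter_eq_self.2 fun x hx ↦ by simpa using mem_alternatingWord hx
  have h2 : ∀ k, (alternatingWord j i k).filter (fun x ↦ x = i ∨ x = j) = alternatingWord j i k :=
    fun k ↦ List.filter_eq_self.2 fun x hx ↦ by simpa using (mem_alternatingWord hx).symm
  rw [List.filter_append, List.filter_append, List.filter_append, List.filter_append, h1, h2,
    List.append_cancel_right_eq, List.append_cancel_left_eq] at hfilter
  obtain ⟨m, hm⟩ : ∃ m, M i j = m + 1 := ⟨M i j - 1, by lia⟩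
  rw [hm, alternatingWord_succ, alternatingWord_succ, List.concat_eq_append,
    List.concat_eq_append] at hfilter
  obtain rfl : j = i := by simpa using (List.append_inj' hfilter rfl).2
  simp at hij

/-- No reduced word of `w` contains a contiguous alternating subword of length `m(i,j) ≥ 3`. -/
def AvoidsLongBraids {B W : Type*} [Group W] {M : CoxeterMatrix B} (cs : CoxeterSystem M W)
    (w : W) : Prop :=
  ∀ l, cs.IsReduced l → cs.wordProd l = w →
    ¬ ∃ (u v : List B) (a b : B), 3 ≤ M a b ∧ l = u ++ alternatingWord a b (M a b) ++ v

section

variable {B W : Type*} [Group W] {M : CoxeterMatrix B} {cs : CoxeterSystem M W}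

theorem AvoidsLongBraids.of_concat {l : List B} {i : B}
    (h : AvoidsLongBraids cs (cs.wordProd (l ++ [i]))) (hl : cs.IsReduced (l ++ [i])) :
    AvoidsLongBraids cs (cs.wordProd l) := by
  rintro l' hl' hprod ⟨u, v, a, b, hab, rfl⟩
  have hprod' : cs.wordProd (u ++ alternatingWord a b (M a b) ++ v ++ [i]) =
      cs.wordProd (l ++ [i]) := by rw [wordProd_append, hprod, wordProd_append]
  have hlen : (u ++ alternatingWord a b (M a b) ++ v).length = l.length := by
    have hl0 : cs.IsReduced l := by simpa using hl.take l.length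
    rw [← hl'.eq, hprod, hl0.eq]
  refine h _ (hl.of_wordProd_eq hprod' ?_) hprod' ⟨u, v ++ [i], a, b, hab, by simp⟩
  rw [List.length_append, hlen, List.length_append]

theorem isRightDescent_of_isReduced_concat {l : List B} {i : B} (hl : cs.IsReduced (l ++ [i])) :
    cs.IsRightDescent (cs.wordProd (l ++ [i])) i := by
  rw [IsRightDescent, hl.eq, wordProd_append, wordProd_singleton, simple_mul_simple_cancel_right]
  exact (cs.length_wordProd_le l).trans_lt (by simp)

theorem AvoidsLongBraids.eq_two {w : W} (h : AvoidsLongBraids cs w) {i j : B} (hij : i ≠ j)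
    (hi : cs.IsRightDescent w i) (hj : cs.IsRightDescent w j) : M i j = 2 := by
  have h0 : M i j ≠ 0 := by
    intro h0
    obtain ⟨ω, hω, hw⟩ := cs.exists_isReduced_append_alternatingWord hij hi hj
      (k := cs.length w + 1) (.inl h0)
    have := hω.eq
    rw [hw, List.length_append, length_alternatingWord] at this
    lia
  have h1 := M.off_diagonal i j hij
  by_contra h2
  obtain ⟨ω, hω, hw⟩ := cs.exists_isReduced_append_alternatingWord hij hi hj (.inr le_rfl)
  exact h _ hω hw ⟨ω, [], i, j, by lia, by simp⟩

theorem AvoidsLongBraids.commEquiv {l l' : List B} (h : AvoidsLongBraids cs (cs.wordProd l))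
    (hl : cs.IsReduced l) (hl' : cs.IsReduced l') (hprod : cs.wordProd l' = cs.wordProd l) :
    CommEquiv M l l' := by
  induction hn : l.length generalizing l l' with
  | zero =>
    have : l'.length = 0 := by rw [← hl'.eq, hprod, hl.eq, hn]
    rw [List.length_eq_zero_iff.1 hn, List.length_eq_zero_iff.1 this]
    exact .refl
  | succ n ih =>
    have hlen : l'.length = n + 1 := by rw [← hl'.eq, hprod, hl.eq, hn]
    have same : ∀ {x y : List B} {i : B}, cs.IsReduced (x ++ [i]) → cs.IsReduced (y ++ [i]) →
        cs.wordProd (x ++ [i]) = cs.wordProd l → cs.wordProd (y ++ [i]) = cs.wordProd l →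
        CommEquiv M (x ++ [i]) (y ++ [i]) := by
      intro x y i hx hy hxl hyl
      have hx' : cs.IsReduced x := by simpa using hx.take x.length
      have hy' : cs.IsReduced y := by simpa using hy.take y.length
      have hxlen := hx.eq
      rw [hxl, hl.eq, hn, List.length_append, List.length_singleton] at hxlen
      refine (ih (AvoidsLongBraids.of_concat (hxl ▸ h) hx) hx' hy' ?_ (by lia)).append_right [i]
      simpa [wordProd_append] using hyl.trans hxl.symm
    obtain rfl | ⟨x, i, rfl⟩ := l.eq_nil_or_concat'
    · simp at hn
    obtain rfl | ⟨y, j, rfl⟩ := l'.eq_nil_or_concat'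
    · simp at hlen
    by_cases hij : i = j
    · subst hij
      exact same hl hl' rfl hprod
    have hi := isRightDescent_of_isReduced_concat hl
    have hj := isRightDescent_of_isReduced_concat hl'
    rw [hprod] at hj
    have hm := h.eq_two hij hi hj
    obtain ⟨ω, hω, hw⟩ := cs.exists_isReduced_append_alternatingWord hij hi hj (.inr hm.ge)
    have hw' : cs.wordProd (ω ++ alternatingWord j i 2) = cs.wordProd (x ++ [i]) := by
      rw [← hw, wordProd_append, wordProd_append, ← hm, wordProd_alternatingWord_comm]
    have hω' : cs.IsReduced (ω ++ alternatingWord j i 2) :=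
      hω.of_wordProd_eq (hw'.trans hw.symm) (by simp)
    have e : ∀ a b : B, ω ++ alternatingWord a b 2 = (ω ++ [a]) ++ [b] := by
      simp [alternatingWord]
    have hstep : CommEquiv M (ω ++ alternatingWord j i 2) (ω ++ alternatingWord i j 2) :=
      .single (.inr ⟨ω, [], i, j, hm, by simp [e], by simp [e]⟩)
    rw [e] at hω hω' hw hw'
    rw [e, e] at hstep
    exact ((same hl hω' rfl hw').trans hstep).trans (same hω hl' hw hprod)

end

/-- `w` is fully commutative iff no reduced word of `w` contains a contiguous
alternating subword `sts⋯` of length `m(s,t)` with `m(s,t) ≥ 3`. -/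
theorem stmt2 {B W : Type*} [Group W] {M : CoxeterMatrix B} (cs : CoxeterSystem M W) (w : W) :
    FullyCommutative cs w ↔
      ∀ l, cs.IsReduced l → cs.wordProd l = w →
        ¬ ∃ (u v : List B) (a b : B), 3 ≤ M a b ∧
          l = u ++ alternatingWord a b (M a b) ++ v := by
  constructor
  · rintro h _ hl hw ⟨u, v, a, b, hab, rfl⟩
    have hprod : cs.wordProd (u ++ alternatingWord b a (M a b) ++ v) =
        cs.wordProd (u ++ alternatingWord a b (M a b) ++ v) := by
      simp only [wordProd_append, cs.wordProd_alternatingWord_comm a b]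
    exact not_commEquiv_alternatingWord hab u v
      (h _ _ hl hw (hl.of_wordProd_eq hprod (by simp)) (hprod.trans hw))
  · rintro h l l' hl rfl hl' hw'
    exact AvoidsLongBraids.commEquiv h hl hl' hw'
end

section
/- Let W be a Coxeter group, I = {s,t} ⊆ S with 3 ≤ m(s,t) < ∞, and let y be an element of a left {s,t}-string for which the lower left star ₍*₎y is defined. Then y and ₍*₎y lie in the same left Kazhdan–Lusztig cell, i.e., y ∼_L ₍*₎y. -/
open CoxeterSystem

namespace CoxeterMatrix

variable {B : Type*} (M : CoxeterMatrix B)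

/-- The negative of the `i`-th row of twice the Gram matrix of the geometric representation. -/
noncomputable def doubledGramRow (i : B) : B → ℝ := fun j => -(2 * Real.cos (Real.pi / M i j))

theorem proj_doubledGramRow_self (i : B) :
    (LinearMap.proj i : Module.Dual ℝ (B → ℝ)) (M.doubledGramRow i) = 2 := by
  simp [doubledGramRow]

/-- The action of the simple reflection `i` on the dual of the geometric representation. -/
noncomputable def dualReflection (i : B) : (B → ℝ) ≃ₗ[ℝ] (B → ℝ) :=
  Module.reflection (M.proj_doubledGramRow_self i)

theorem dualReflection_apply (i j : B) (g : B → ℝ) :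
    M.dualReflection i g j = g j + 2 * Real.cos (Real.pi / M i j) * g i := by
  simp [dualReflection, Module.reflection_apply, doubledGramRow]
  ring

theorem dualReflection_apply_self (i : B) (g : B → ℝ) : M.dualReflection i g i = -g i := by
  simp [dualReflection_apply]
  ring

theorem chebyshevS_coeff_eq_zero {m : ℕ} (hm : 3 ≤ m) :
    let S (n : ℤ) := (Polynomial.Chebyshev.S ℝ n).eval (2 * Real.cos (2 * Real.pi / m))
    S ((m - 2) / 2) * (S ((m - 1) / 2) + S ((m - 3) / 2)) = 0 ∧
      S ((m - 1) / 2) * (S (m / 2) + S ((m - 2) / 2)) = 0 := by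
  intro S
  have hm0 : (m : ℝ) ≠ 0 := by positivity
  have hm3 : (3 : ℝ) ≤ m := by exact_mod_cast hm
  have hsin : Real.sin (2 * Real.pi / m) ≠ 0 := by
    apply ne_of_gt
    apply Real.sin_pos_of_pos_of_lt_pi
    · positivity
    · rw [div_lt_iff₀ (by positivity)]
      nlinarith [Real.pi_pos]
  have hS (n : ℤ) : S n * Real.sin (2 * Real.pi / m) = Real.sin ((n + 1) * (2 * Real.pi / m)) :=
    Polynomial.Chebyshev.S_two_mul_real_cos _ n
  obtain ⟨q, rfl | rfl⟩ := Nat.even_or_odd' m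
  · have hq0 : (q : ℝ) ≠ 0 := by
      rintro h
      simp [h] at hm0
    have hz : S (q - 1) = 0 := by
      refine (mul_eq_zero.mp ?_).resolve_right hsin
      rw [hS]
      push_cast
      rw [show ((q : ℝ) - 1 + 1) * (2 * Real.pi / (2 * q)) = Real.pi by field_simp; ring,
        Real.sin_pi]
    rw [show (((2 * q : ℕ) : ℤ) - 2) / 2 = q - 1 by omega,
      show (((2 * q : ℕ) : ℤ) - 1) / 2 = q - 1 by omega]
    simp [hz]
  · have hz : S q + S (q - 1) = 0 := by
      refine (mul_eq_zero.mp ?_).resolve_right hsin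
      rw [add_mul, hS, hS]
      push_cast at hm0 ⊢
      rw [show ((q : ℝ) + 1) * (2 * Real.pi / (2 * q + 1)) =
          2 * Real.pi - ((q : ℝ) - 1 + 1) * (2 * Real.pi / (2 * q + 1)) by field_simp; ring,
        Real.sin_two_pi_sub, neg_add_cancel]
    rw [show (((2 * q + 1 : ℕ) : ℤ) - 2) / 2 = q - 1 by omega,
      show (((2 * q + 1 : ℕ) : ℤ) - 1) / 2 = q by omega,
      show (((2 * q + 1 : ℕ) : ℤ) - 3) / 2 = q - 1 by omega,
      show ((2 * q + 1 : ℕ) : ℤ) / 2 = q by omega]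
    simp [hz]

theorem isLiftable_dualReflection : M.IsLiftable M.dualReflection := by
  intro i j
  have hself (k : B) : M.dualReflection k * M.dualReflection k = 1 := by
    ext1 g
    exact Module.involutive_reflection (M.proj_doubledGramRow_self k) g
  obtain h0 | h1 | h2 | h3 : M i j = 0 ∨ M i j = 1 ∨ M i j = 2 ∨ 3 ≤ M i j := by omega
  · simp [h0]
  · obtain rfl : i = j := by
      by_contra h
      exact M.off_diagonal i j h h1
    simp [hself]
  · have h2' : M j i = 2 := M.symmetric i j ▸ h2
    have hcomm : M.dualReflection i * M.dualReflection j =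
        M.dualReflection j * M.dualReflection i := by
      ext g k
      simp only [LinearEquiv.mul_apply, M.dualReflection_apply, h2, h2', Nat.cast_ofNat,
        Real.cos_pi_div_two]
      ring
    rw [h2, pow_two]
    nth_rw 2 [hcomm]
    rw [mul_assoc, ← mul_assoc (M.dualReflection j), hself, one_mul, hself]
  · obtain ⟨hc, hc'⟩ := chebyshevS_coeff_eq_zero h3
    ext1 g
    have ht : 2 * Real.cos (2 * Real.pi / M i j) =
        (LinearMap.proj i : Module.Dual ℝ (B → ℝ)) (M.doubledGramRow j) *
          (LinearMap.proj j : Module.Dual ℝ (B → ℝ)) (M.doubledGramRow i) - 2 := by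
      simp only [LinearMap.proj_apply, doubledGramRow, M.symmetric j i]
      rw [mul_div_assoc, Real.cos_two_mul]
      ring
    rw [dualReflection, dualReflection, Module.reflection_mul_reflection_pow_apply _ _ _ _ _ ht,
      hc, hc']
    simp

theorem exists_sineSequence {m : ℕ} (hm : m ≠ 1) :
    ∃ U : ℕ → ℝ, U 0 = 0 ∧ U 1 = 1 ∧
      (∀ n, U (n + 2) = 2 * Real.cos (Real.pi / m) * U (n + 1) - U n) ∧
      ∀ n, n < m ∨ m = 0 → 0 ≤ U (n + 1) ∧ (0 < n → 0 < U n) := by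
  obtain rfl | hm0 := eq_or_ne m 0
  · refine ⟨fun n => n, by simp, by simp, fun n => ?_, fun n _ => ⟨by positivity, fun h => ?_⟩⟩
    · simp
      ring
    · exact Nat.cast_pos.mpr h
  have hm2 : (2 : ℝ) ≤ m := by exact_mod_cast (by omega : 2 ≤ m)
  have hθ : 0 < Real.pi / m := by positivity
  have hbound (n : ℕ) (h : n ≤ m) : n * (Real.pi / m) ≤ Real.pi := by
    have : (n : ℝ) ≤ m := by exact_mod_cast h
    rw [mul_div_assoc', div_le_iff₀ (by positivity)]
    nlinarith [Real.pi_pos]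
  have hsin : 0 < Real.sin (Real.pi / m) := by
    apply Real.sin_pos_of_pos_of_lt_pi hθ
    rw [div_lt_iff₀ (by positivity)]
    nlinarith [Real.pi_pos]
  refine ⟨fun n => Real.sin (n * (Real.pi / m)) / Real.sin (Real.pi / m), by simp, ?_, fun n => ?_,
    fun n hn => ⟨?_, fun h => ?_⟩⟩
  · simp [hsin.ne']
  · have h1 := Real.sin_add ((n + 1) * (Real.pi / m)) (Real.pi / m)
    have h2 := Real.sin_sub ((n + 1) * (Real.pi / m)) (Real.pi / m)
    rw [show (n + 1 : ℝ) * (Real.pi / m) + Real.pi / m = (n + 2) * (Real.pi / m) by ring] at h1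
    rw [show (n + 1 : ℝ) * (Real.pi / m) - Real.pi / m = n * (Real.pi / m) by ring] at h2
    push_cast
    rw [h1, h2]
    ring
  · apply div_nonneg _ hsin.le
    exact Real.sin_nonneg_of_nonneg_of_le_pi (by positivity) (hbound _ (by omega))
  · apply div_pos _ hsin
    apply Real.sin_pos_of_pos_of_lt_pi (by positivity)
    have h1 := hbound (n + 1) (by omega)
    push_cast at h1
    linarith

end CoxeterMatrix

namespace CoxeterSystem

variable {B W : Type*} [Group W] {M : CoxeterMatrix B} (cs : CoxeterSystem M W)

/-- The dual of the geometric representation of a Coxeter group. -/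
noncomputable def dualRep : W →* ((B → ℝ) ≃ₗ[ℝ] (B → ℝ)) :=
  cs.lift ⟨M.dualReflection, M.isLiftable_dualReflection⟩

theorem dualRep_simple_mul_apply (i j : B) (w : W) (g : B → ℝ) :
    cs.dualRep (cs.simple i * w) g j =
      cs.dualRep w g j + 2 * Real.cos (Real.pi / M i j) * cs.dualRep w g i := by
  simp [dualRep, M.dualReflection_apply]

theorem dualRep_simple_mul_apply_self (i : B) (w : W) (g : B → ℝ) :
    cs.dualRep (cs.simple i * w) g i = -cs.dualRep w g i := by
  simp [dualRep, M.dualReflection_apply_self]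

theorem dualRep_alternatingWord_mul_apply_pos {a b : B} (hab : a ≠ b) (w : W) (g : B → ℝ)
    (ha : 0 < cs.dualRep w g a) (hb : 0 < cs.dualRep w g b) {n : ℕ} (hn : n < M a b ∨ M a b = 0) :
    0 < cs.dualRep (cs.wordProd (alternatingWord a b n) * w) g (if Even n then b else a) := by
  obtain ⟨U, hU0, hU1, hU, hUpos⟩ := CoxeterMatrix.exists_sineSequence (M.off_diagonal a b hab)
  have key (n : ℕ) :
      cs.dualRep (cs.wordProd (alternatingWord a b n) * w) g (if Even n then b else a) =
          U (n + 1) * cs.dualRep w g b + U n * cs.dualRep w g a ∧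
        cs.dualRep (cs.wordProd (alternatingWord a b n) * w) g (if Even n then a else b) =
          U (n + 2) * cs.dualRep w g b + U (n + 1) * cs.dualRep w g a -
            2 * Real.cos (Real.pi / M a b) *
              (U (n + 1) * cs.dualRep w g b + U n * cs.dualRep w g a) := by
    induction n with
    | zero => simp [alternatingWord, hU, hU0, hU1]
    | succ n ih =>
      obtain ⟨ih1, ih2⟩ := ih
      rw [alternatingWord_succ', wordProd_cons, mul_assoc, hU (n + 1)]
      by_cases h : Even n
      · have h' : ¬ Even (n + 1) := by simp [Nat.even_add_one, h]
        simp only [h, h', if_true, if_false] at ih1 ih2 ⊢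
        rw [dualRep_simple_mul_apply, dualRep_simple_mul_apply_self, ih1, ih2, M.symmetric b a]
        constructor
        · ring
        · linear_combination (-cs.dualRep w g a) * hU n
      · have h' : Even (n + 1) := by simp [Nat.even_add_one, h]
        simp only [h, h', if_true, if_false] at ih1 ih2 ⊢
        rw [dualRep_simple_mul_apply, dualRep_simple_mul_apply_self, ih1, ih2]
        constructor
        · ring
        · linear_combination (-cs.dualRep w g a) * hU n
  rw [(key n).1]
  obtain ⟨h1, h2⟩ := hUpos n hn
  obtain rfl | hpos := Nat.eq_zero_or_pos n
  · simpa [hU0, hU1] using hb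
  · have := mul_pos (h2 hpos) ha
    positivity

/-- A letter that is not a left descent of `w` is positive on the image under `w` of a point in the
open fundamental chamber. -/
theorem dualRep_apply_pos_of_not_isLeftDescent (w : W) (i : B) (hi : ¬ cs.IsLeftDescent w i) :
    0 < cs.dualRep w 1 i := by
  induction hN : cs.length w using Nat.strong_induction_on generalizing w i with
  | _ N ih =>
  subst hN
  have strip (L : ℕ) : ∀ (x : W) (a b : B) (k : ℕ), cs.length x = L → a ≠ b → 0 < k →
      (if Even k then b else a) = i → w = cs.wordProd (alternatingWord a b k) * x →
      cs.length w = k + cs.length x → 0 < cs.dualRep w 1 i := by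
    induction L using Nat.strong_induction_on with
    | _ L ihL =>
    intro x a b k hx hab hk hki hw hlen
    by_cases ha : cs.IsLeftDescent x a
    · have hl := cs.isLeftDescent_iff.mp ha
      refine ihL _ (by omega) (cs.simple a * x) b a (k + 1) rfl hab.symm (by omega) ?_ ?_ (by omega)
      · simpa only [Nat.even_add_one, ite_not] using hki
      · rw [alternatingWord_succ, wordProd_concat, mul_assoc, simple_mul_simple_cancel_left, hw]
    · have hb : ¬ cs.IsLeftDescent x b := by
        intro hb
        have hl := cs.isLeftDescent_iff.mp hb
        obtain ⟨k, rfl⟩ := Nat.exists_eq_succ_of_ne_zero hk.ne'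
        have hw' : w = cs.wordProd (alternatingWord b a k) * (cs.simple b * x) := by
          rw [hw, Nat.succ_eq_add_one, alternatingWord_succ, wordProd_concat, mul_assoc]
        have h1 := cs.length_mul_le (cs.wordProd (alternatingWord b a k)) (cs.simple b * x)
        have h2 := cs.length_wordProd_le (alternatingWord b a k)
        rw [length_alternatingWord] at h2
        rw [← hw'] at h1
        omega
      have hkM : k < M a b ∨ M a b = 0 := by
        by_contra! hcon
        have h1 := cs.not_isReduced_alternatingWord a b hcon.2 (m := k + 1) (by omega)
        have h2 := cs.length_wordProd_le (alternatingWord a b (k + 1))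
        have h3 := cs.length_mul_le (cs.wordProd (alternatingWord a b (k + 1))) x
        rw [IsReduced] at h1
        rw [length_alternatingWord] at h1 h2
        rw [alternatingWord_succ', wordProd_cons, hki] at h1 h2 h3
        rw [mul_assoc, ← hw] at h3
        have h4 := cs.not_isLeftDescent_iff.mp hi
        omega
      have := cs.dualRep_alternatingWord_mul_apply_pos hab x 1
        (ih _ (by omega) x a ha rfl) (ih _ (by omega) x b hb rfl) hkM
      rwa [hki, ← hw] at this
  obtain rfl | hw1 := eq_or_ne w 1
  · simp
  · obtain ⟨j, hj⟩ := cs.exists_leftDescent_of_ne_one hw1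
    have hij : i ≠ j := by
      rintro rfl
      exact hi hj
    have hl := cs.isLeftDescent_iff.mp hj
    exact strip _ (cs.simple j * w) i j 1 rfl hij one_pos (by simp) (by simp [alternatingWord])
      (by omega)

theorem isLeftDescent_iff_dualRep_apply_neg (w : W) (i : B) :
    cs.IsLeftDescent w i ↔ cs.dualRep w 1 i < 0 := by
  refine ⟨fun h => ?_, fun h => ?_⟩
  · have := cs.dualRep_apply_pos_of_not_isLeftDescent _ i
      (cs.isLeftDescent_iff_not_isLeftDescent_mul.mp h)
    rw [dualRep_simple_mul_apply_self] at this
    linarith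
  · by_contra hi
    exact h.not_gt (cs.dualRep_apply_pos_of_not_isLeftDescent w i hi)

/-- Over an element without left descents in `{a, b}`, the letter extending an alternating word
shorter than the braid word is not a left descent. -/
theorem not_isLeftDescent_alternatingWord_mul {a b : B} (hab : a ≠ b) {w : W}
    (ha : ¬ cs.IsLeftDescent w a) (hb : ¬ cs.IsLeftDescent w b) {n : ℕ}
    (hn : n < M a b ∨ M a b = 0) :
    ¬ cs.IsLeftDescent (cs.wordProd (alternatingWord a b n) * w) (if Even n then b else a) := by
  rw [isLeftDescent_iff_dualRep_apply_neg, not_lt]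
  exact (cs.dualRep_alternatingWord_mul_apply_pos hab w 1
    (cs.dualRep_apply_pos_of_not_isLeftDescent w a ha)
    (cs.dualRep_apply_pos_of_not_isLeftDescent w b hb) hn).le

end CoxeterSystem


/-- let `leL` be the left Kazhdan–Lusztig preorder `≤_L` (an arbitrary
reflexive transitive relation satisfying the two standard facts: `sy ≤_L y` whenever
`sy > y`, and `x ≤_L y` whenever `y = s x` covers `x` and some left descent of `x` is
not a left descent of `y`).  If `y` lies in a left `{a,b}`-string and the lower left
star `₍*₎y` is defined, then `y ∼_L ₍*₎y`.  Here the string element of coordinate `r`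
is `π(alternatingWord a b r) * w'` where `ᴵy = w'` has no left descent in `{a,b}` and
`2 ≤ r ≤ m(a,b) − 1`. -/
theorem stmt11 {B W : Type*} [Group W] {M : CoxeterMatrix B} (cs : CoxeterSystem M W)
    (leL : W → W → Prop)
    (hrefl : ∀ x, leL x x)
    (htrans : ∀ x y z, leL x y → leL y z → leL x z)
    (h1 : ∀ (x : W) (i : B), ¬ cs.IsLeftDescent x i → leL (cs.simple i * x) x)
    (h2 : ∀ (x y : W) (i : B), y = cs.simple i * x → cs.length y = cs.length x + 1 →
      (∃ j : B, cs.IsLeftDescent x j ∧ ¬ cs.IsLeftDescent y j) → leL x y)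
    (a b : B) (hab : a ≠ b) (hm : 3 ≤ M a b)
    (w' : W) (hw'a : ¬ cs.IsLeftDescent w' a) (hw'b : ¬ cs.IsLeftDescent w' b)
    (r : ℕ) (hr2 : 2 ≤ r) (hrm : r ≤ M a b - 1)
    (hlen : cs.length (cs.wordProd (alternatingWord a b r) * w') = r + cs.length w') :
    leL (cs.wordProd (alternatingWord a b r) * w')
        (cs.wordProd (alternatingWord a b (r - 1)) * w') ∧
    leL (cs.wordProd (alternatingWord a b (r - 1)) * w')
        (cs.wordProd (alternatingWord a b r) * w') := by
  obtain ⟨k, rfl⟩ : ∃ k, r = k + 2 := ⟨r - 2, by omega⟩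
  have hnot := cs.not_isLeftDescent_alternatingWord_mul hab hw'a hw'b (n := k + 2)
    (Or.inl (by omega))
  have hy : cs.wordProd (alternatingWord a b (k + 2)) * w' =
      cs.simple (if Even (k + 1) then b else a) *
        (cs.wordProd (alternatingWord a b (k + 1)) * w') := by
    rw [alternatingWord_succ', wordProd_cons, mul_assoc]
  have hx : cs.wordProd (alternatingWord a b (k + 1)) * w' =
      cs.simple (if Even (k + 2) then b else a) *
        (cs.wordProd (alternatingWord a b k) * w') := by
    rw [alternatingWord_succ', wordProd_cons, mul_assoc]
    simp [Nat.even_add]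
  have hle (n : ℕ) : cs.length (cs.wordProd (alternatingWord a b n) * w') ≤ n + cs.length w' := by
    refine (cs.length_mul_le _ _).trans (Nat.add_le_add_right ?_ _)
    simpa using cs.length_wordProd_le (alternatingWord a b n)
  have hle0 := hle k
  have hle1 := hle (k + 1)
  have hstep := cs.length_simple_mul (cs.wordProd (alternatingWord a b (k + 1)) * w')
    (if Even (k + 1) then b else a)
  rw [← hy] at hstep
  change leL _ (cs.wordProd (alternatingWord a b (k + 1)) * w') ∧
    leL (cs.wordProd (alternatingWord a b (k + 1)) * w') _
  refine ⟨?_, h2 _ _ _ hy (by omega) ⟨if Even (k + 2) then b else a, ?_, hnot⟩⟩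
  · rw [hy]
    apply h1
    rw [not_isLeftDescent_iff, ← hy]
    omega
  · rw [IsLeftDescent, hx, simple_mul_simple_cancel_left, ← hx]
    omega
end

section
/- Let W be a Coxeter group with generators a,b,c,d where m(a,b) ≥ 3, m(b,c) = 5, m(c,d) ≥ 3, and all other pairs commute, and let w be fully commutative. Then if every reduced word of w is (acbc)(bdcb)(acbc)⋯ alternating, i.e., w_k = XYXY⋯ with X = acbc, Y = bdcb and k total factors, then w_k is a reduced word of a fully commutative element for every k ≥ 0. -/
open CoxeterSystem

/-- The word `w_k = XYXY⋯` with `k` alternating factors, `X = acbc`, `Y = bdcb`,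
where `a = 0`, `b = 1`, `c = 2`, `d = 3`. -/
def wWord (k : ℕ) : List (Fin 4) :=
  (List.ofFn fun i : Fin k =>
    if (i : ℕ) % 2 = 0 then ([0, 2, 1, 2] : List (Fin 4)) else [1, 3, 2, 1]).flatten

namespace CoxeterSystem

section InversionParity

variable {B W : Type*} [Group W] {M : CoxeterMatrix B} (cs : CoxeterSystem M W)

open scoped Classical in
/-- The action of a simple reflection on `W × ℤ/2` which conjugates the first coordinate and changes
the second one exactly when the first one is that reflection. -/
noncomputable def parityStep (i : B) : Function.End (W × ZMod 2) := fun p =>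
  (cs.simple i * p.1 * cs.simple i, p.2 + if p.1 = cs.simple i then 1 else 0)

open scoped Classical in
theorem prod_map_parityStep_apply (ω : List B) (t : W) (ε : ZMod 2) :
    (ω.map cs.parityStep).prod (t, ε) =
      (cs.wordProd ω * t * (cs.wordProd ω)⁻¹, ε + (cs.rightInvSeq ω).count t) := by
  induction ω with
  | nil => simp [Function.End.one_def]
  | cons i ω ih =>
    have h : cs.wordProd ω * t * (cs.wordProd ω)⁻¹ = cs.simple i ↔
        (cs.wordProd ω)⁻¹ * cs.simple i * cs.wordProd ω = t := by
      constructor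
      · intro h; rw [← h]; group
      · intro h; rw [← h]; group
    rw [List.map_cons, List.prod_cons]
    change cs.parityStep i ((ω.map cs.parityStep).prod (t, ε)) = _
    rw [ih, parityStep, rightInvSeq, List.count_cons]
    simp only [h, beq_iff_eq]
    simp only [wordProd_cons, mul_inv_rev, inv_simple, mul_assoc, Nat.cast_add,
      Nat.cast_ite, Nat.cast_one, Nat.cast_zero, add_assoc]

theorem leftInvSeq_alternatingWord_eq_append (i j : B) :
    ∃ l : List W, cs.leftInvSeq (alternatingWord i j (2 * M i j)) = l ++ l := by
  refine ⟨(List.range (M i j)).map fun k => cs.wordProd (alternatingWord j i (2 * k + 1)), ?_⟩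
  apply List.ext_getElem
  · simp [two_mul]
  intro k h₁ h₂
  rw [cs.getElem_leftInvSeq_alternatingWord i j (M i j) k (by simpa using h₁)]
  rw [List.getElem_append]
  split_ifs with h
  · simp
  · simp only [List.length_map, List.length_range, not_lt] at h
    obtain ⟨r, rfl⟩ := Nat.exists_eq_add_of_le h
    have hr : (2 * (M i j + r) + 1) / 2 = M i j + r := by lia
    have hr' : (2 * r + 1) / 2 = r := by lia
    simp [prod_alternatingWord_eq_mul_pow, hr, hr', pow_add]

theorem prod_map_alternatingWord {G : Type*} [Monoid G] (f : B → G) (i j : B) (m : ℕ) :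
    ((alternatingWord i j (2 * m)).map f).prod = (f i * f j) ^ m := by
  induction m with
  | zero => simp [alternatingWord]
  | succ m ih =>
    rw [Nat.mul_succ, alternatingWord_succ, alternatingWord_succ]
    simp [ih, pow_succ]

theorem isLiftable_parityStep : M.IsLiftable cs.parityStep := by
  classical
  intro i j
  funext ⟨t, ε⟩
  rw [← prod_map_alternatingWord, prod_map_parityStep_apply]
  have h₁ : cs.wordProd (alternatingWord i j (2 * M i j)) = 1 := by
    simp [prod_alternatingWord_eq_mul_pow]
  have h₂ : (alternatingWord j i (2 * M i j)).reverse = alternatingWord i j (2 * M i j) := by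
    have h (m : ℕ) : (alternatingWord j i (2 * m)).reverse = alternatingWord i j (2 * m) := by
      induction m with
      | zero => rfl
      | succ m ih =>
        rw [Nat.mul_succ, alternatingWord_succ, alternatingWord_succ,
          alternatingWord_succ', alternatingWord_succ']
        simp [ih]
    exact h _
  obtain ⟨l, hl⟩ := cs.leftInvSeq_alternatingWord_eq_append j i
  rw [M.symmetric j i] at hl
  rw [h₁, ← h₂, rightInvSeq_reverse, hl, List.count_reverse, List.count_append]
  simp [CharTwo.add_self_eq_zero, Function.End.one_def]

open scoped Classical in
/-- The parity of the multiplicity of `t` in the left inversion sequence of a word depends only on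
the element the word represents. -/
theorem count_leftInvSeq_eq {ω ω' : List B} (h : cs.wordProd ω = cs.wordProd ω') (t : W) :
    ((cs.leftInvSeq ω).count t : ZMod 2) = (cs.leftInvSeq ω').count t := by
  have key (ω : List B) : ((cs.leftInvSeq ω).count t : ZMod 2) =
      (cs.lift ⟨_, cs.isLiftable_parityStep⟩ (cs.wordProd ω)⁻¹ (t, 0)).2 := by
    rw [← wordProd_reverse, wordProd, map_list_prod, List.map_map]
    have : (cs.lift ⟨_, cs.isLiftable_parityStep⟩ : W → Function.End (W × ZMod 2)) ∘ cs.simple =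
        cs.parityStep := by
      funext i
      simp
    rw [this, prod_map_parityStep_apply, rightInvSeq_reverse, List.count_reverse, zero_add]
  rw [key, key, h]

theorem IsReduced.simple_mem_leftInvSeq {i : B} {ω ω' : List B} (hω : cs.IsReduced (i :: ω))
    (h : cs.wordProd (i :: ω) = cs.wordProd ω') : cs.simple i ∈ cs.leftInvSeq ω' := by
  classical
  have h₁ := cs.count_leftInvSeq_eq h (cs.simple i)
  rw [List.count_eq_one_of_mem hω.nodup_leftInvSeq (by simp [leftInvSeq])] at h₁
  by_contra h₂
  rw [List.count_eq_zero_of_not_mem h₂] at h₁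
  simp at h₁

theorem IsReduced.cons {i : B} {ω : List B} (hω : cs.IsReduced ω)
    (h : cs.simple i ∉ cs.leftInvSeq ω) : cs.IsReduced (i :: ω) := by
  rcases cs.length_simple_mul (cs.wordProd ω) i with h₁ | h₁
  · rw [IsReduced, wordProd_cons, h₁, hω.eq, List.length_cons]
  · obtain ⟨ω', hω', hp⟩ := cs.exists_isReduced (cs.simple i * cs.wordProd ω)
    have h₂ : cs.wordProd (i :: ω') = cs.wordProd ω := by simp [wordProd_cons, ← hp]
    refine absurd (IsReduced.simple_mem_leftInvSeq cs ?_ h₂) h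
    rw [IsReduced, h₂, List.length_cons, ← hω'.eq, ← hp, h₁]

end InversionParity

end CoxeterSystem

section CommEquiv

variable {B : Type*} {M : CoxeterMatrix B}

theorem CommEquiv.symm {l l' : List B} (h : CommEquiv M l l') : CommEquiv M l' l := by
  induction h with
  | refl => exact .refl
  | tail _ h ih => exact .head h.symm ih

theorem CommEquiv.cons {l l' : List B} (h : CommEquiv M l l') (i : B) :
    CommEquiv M (i :: l) (i :: l') := by
  have hstep {l l' : List B} (h : CommStep M l l') : CommStep M (i :: l) (i :: l') := by
    obtain ⟨u, v, a, b, hab, rfl, rfl⟩ := h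
    exact ⟨i :: u, v, a, b, hab, rfl, rfl⟩
  induction h with
  | refl => exact .refl
  | tail _ h ih => exact ih.tail (h.imp hstep hstep)

theorem CommEquiv.swap {i j : B} (h : M i j = 2) (l : List B) :
    CommEquiv M (i :: j :: l) (j :: i :: l) :=
  .single (.inl ⟨[], l, i, j, h, rfl, rfl⟩)

theorem CommEquiv.wordProd_eq {W : Type*} [Group W] (cs : CoxeterSystem M W) {l l' : List B}
    (h : CommEquiv M l l') : cs.wordProd l = cs.wordProd l' := by
  have hstep {l l' : List B} (h : CommStep M l l') : cs.wordProd l = cs.wordProd l' := by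
    obtain ⟨u, v, a, b, hab, rfl, rfl⟩ := h
    have hc := cs.wordProd_braidWord_eq a b
    rw [braidWord, braidWord, M.symmetric b a, hab] at hc
    simp only [alternatingWord, List.concat_eq_append, List.nil_append, wordProd_append,
      wordProd_singleton] at hc
    simp only [wordProd_append, wordProd_cons]
    rw [← mul_assoc (cs.simple a), ← mul_assoc (cs.simple b), hc]
  induction h with
  | refl => rfl
  | tail _ h ih => exact ih.trans (h.elim hstep fun h => (hstep h).symm)

end CommEquiv

section Reflections

/-- The simple reflections of the Coxeter group with diagram `a—b—c—d`, `m(b,c) = 5`, in the basis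
of simple roots. Here `ψ` is the inverse of the golden ratio. -/
def simpleReflection (ψ : ℝ) : Fin 4 → Function.End (ℝ × ℝ × ℝ × ℝ)
  | 0 => fun (a, b, c, d) => (b - a, b, c, d)
  | 1 => fun (a, b, c, d) => (a, a + (1 + ψ) * c - b, c, d)
  | 2 => fun (a, b, c, d) => (a, b, (1 + ψ) * b + d - c, d)
  | 3 => fun (a, b, c, d) => (a, b, c, c - d)

theorem simpleReflection_simpleReflection (ψ : ℝ) (i : Fin 4) (v : ℝ × ℝ × ℝ × ℝ) :
    simpleReflection ψ i (simpleReflection ψ i v) = v := by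
  obtain ⟨a, b, c, d⟩ := v
  fin_cases i <;> simp [simpleReflection]

theorem simpleReflection_neg (ψ : ℝ) (i : Fin 4) (v : ℝ × ℝ × ℝ × ℝ) :
    simpleReflection ψ i (-v) = -simpleReflection ψ i v := by
  obtain ⟨a, b, c, d⟩ := v
  fin_cases i <;> simp [simpleReflection] <;> ring

theorem isLiftable_simpleReflection {M : CoxeterMatrix (Fin 4)} (hab : M 0 1 = 3) (hbc : M 1 2 = 5)
    (hcd : M 2 3 = 3) (hac : M 0 2 = 2) (had : M 0 3 = 2) (hbd : M 1 3 = 2) {ψ : ℝ}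
    (hψ : ψ ^ 2 = 1 - ψ) : M.IsLiftable (simpleReflection ψ) := by
  have hsq (i : Fin 4) : simpleReflection ψ i * simpleReflection ψ i = 1 :=
    funext (simpleReflection_simpleReflection ψ i)
  have hswap {i j : Fin 4} {m : ℕ} (h : (simpleReflection ψ i * simpleReflection ψ j) ^ m = 1) :
      (simpleReflection ψ j * simpleReflection ψ i) ^ m = 1 := by
    have hc : simpleReflection ψ i * simpleReflection ψ j *
        (simpleReflection ψ j * simpleReflection ψ i) = 1 := by
      rw [mul_assoc, ← mul_assoc (simpleReflection ψ j), hsq, one_mul, hsq]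
    have hc' : simpleReflection ψ j * simpleReflection ψ i *
        (simpleReflection ψ i * simpleReflection ψ j) = 1 := by
      rw [mul_assoc, ← mul_assoc (simpleReflection ψ i), hsq, one_mul, hsq]
    have := Commute.mul_pow (hc.trans hc'.symm) m
    rwa [hc, one_pow, h, one_mul, eq_comm] at this
  have h01 : (simpleReflection ψ 0 * simpleReflection ψ 1) ^ 3 = 1 := by
    funext ⟨a, b, c, d⟩
    change (_, _, _, _) = (_, _, _, _)
    ext <;> simp <;> ring
  have h12 : (simpleReflection ψ 1 * simpleReflection ψ 2) ^ 5 = 1 := by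
    have h1 (a b c d : ℝ) : (simpleReflection ψ 1 * simpleReflection ψ 2) (a, b, c, d) =
        (a, a + (1 + ψ) * (b + d - c), (1 + ψ) * b + d - c, d) := by
      change (_, _, _, _) = (_, _, _, _)
      ext <;> simp
      linear_combination b * hψ
    have h2 (a b c d : ℝ) : ((simpleReflection ψ 1 * simpleReflection ψ 2) ^ 2) (a, b, c, d) =
        (a, (2 + ψ) * (a + d) - c, (1 + ψ) * (a - c) + b + (2 + ψ) * d, d) := by
      rw [pow_two]
      change (simpleReflection ψ 1 * simpleReflection ψ 2)
        ((simpleReflection ψ 1 * simpleReflection ψ 2) (a, b, c, d)) = _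
      rw [h1, h1]
      ext <;> simp <;> grind
    rw [pow_succ, pow_mul _ 2 2, pow_two (_ ^ 2)]
    funext ⟨a, b, c, d⟩
    change ((simpleReflection ψ 1 * simpleReflection ψ 2) ^ 2)
      (((simpleReflection ψ 1 * simpleReflection ψ 2) ^ 2)
        ((simpleReflection ψ 1 * simpleReflection ψ 2) (a, b, c, d))) = (a, b, c, d)
    rw [h1, h2, h2]
    ext <;> simp <;> grind
  have h23 : (simpleReflection ψ 2 * simpleReflection ψ 3) ^ 3 = 1 := by
    funext ⟨a, b, c, d⟩
    change (_, _, _, _) = (_, _, _, _)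
    ext <;> simp <;> ring
  have h02 : (simpleReflection ψ 0 * simpleReflection ψ 2) ^ 2 = 1 := by
    funext ⟨a, b, c, d⟩
    change (_, _, _, _) = (_, _, _, _)
    ext <;> simp
  have h03 : (simpleReflection ψ 0 * simpleReflection ψ 3) ^ 2 = 1 := by
    funext ⟨a, b, c, d⟩
    change (_, _, _, _) = (_, _, _, _)
    ext <;> simp
  have h13 : (simpleReflection ψ 1 * simpleReflection ψ 3) ^ 2 = 1 := by
    funext ⟨a, b, c, d⟩
    change (_, _, _, _) = (_, _, _, _)
    ext <;> simp
  intro i j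
  rcases lt_trichotomy i j with h | rfl | h
  · fin_cases i <;> fin_cases j <;> simp_all
  · simp [hsq]
  · rw [M.symmetric]
    apply hswap
    fin_cases i <;> fin_cases j <;> simp_all

/-- The positions in the periodic word `acbcbdcb⋯`, up to exchanging commuting neighbours; each is
named after the next four letters. -/
inductive Position
  | acbc | cbcb | bcbd | cbdc | bdcb | dcba | cbac | bacb | abcb | bcba

namespace Position

def letter : Position → Fin 4
  | acbc | abcb => 0
  | bcbd | bdcb | bacb | bcba => 1
  | cbcb | cbdc | cbac => 2
  | dcba => 3

def next : Position → Position
  | acbc => cbcb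
  | cbcb | abcb => bcbd
  | bcbd => cbdc
  | cbdc => bdcb
  | bdcb => dcba
  | dcba | bcba => cbac
  | cbac => bacb
  | bacb => acbc

/-- The letters that can be moved to the front. -/
def heads : Position → List (Fin 4)
  | acbc => [0, 2]
  | bdcb => [1, 3]
  | p => [p.letter]

/-- Whether the position is not between two commuting letters. -/
def IsCut : Position → Prop
  | cbcb | dcba | abcb | bcba => False
  | _ => True

/-- The words read from a position up to some cut. -/
inductive Reads : Position → List (Fin 4) → Prop
  | nil {p : Position} : p.IsCut → Reads p []
  | cons {p : Position} {l : List (Fin 4)} : Reads p.next l → Reads p (p.letter :: l)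

/-- A cone of nonnegative vectors that contains the simple roots outside `heads` and is mapped into
the cone of the next position by the simple reflection of the current letter. -/
def Cone (ψ : ℝ) (p : Position) : ℝ × ℝ × ℝ × ℝ → Prop := fun (a, b, c, d) =>
  (0 ≤ a ∧ 0 ≤ b ∧ 0 ≤ c ∧ 0 ≤ d) ∧ match p with
    | acbc => a ≤ b ∧ a + ψ * c ≤ b + ψ * d
    | cbcb => c ≤ (1 + ψ) * b + d ∧ ψ * c ≤ a + ψ * d
    | bcbd => b ≤ a + ψ * c
    | cbdc => c ≤ b
    | bdcb => d ≤ c ∧ b ≤ a + (1 + ψ) * c ∧ d + ψ * b ≤ c + ψ * a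
    | dcba => d ≤ c ∧ d ≤ ψ * b
    | cbac => c ≤ d + ψ * b
    | bacb => b ≤ c
    | abcb => a ≤ b ∧ a ≤ ψ * c
    | bcba => b ≤ a + (1 + ψ) * c ∧ ψ * b ≤ d + ψ * a

variable {ψ : ℝ} {p : Position} {v : ℝ × ℝ × ℝ × ℝ}

theorem Cone.nonneg (h : p.Cone ψ v) : 0 ≤ v := by
  obtain ⟨a, b, c, d⟩ := v
  obtain ⟨⟨ha, hb, hc, hd⟩, -⟩ := h
  exact ⟨ha, hb, hc, hd⟩

theorem Cone.next (h0 : 0 < ψ) (hψ : ψ ^ 2 = 1 - ψ) (h : p.Cone ψ v) :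
    p.next.Cone ψ (simpleReflection ψ p.letter v) := by
  obtain ⟨a, b, c, d⟩ := v
  obtain ⟨⟨ha, hb, hc, hd⟩, h⟩ := h
  have hb' := mul_nonneg h0.le hb
  have hc' := mul_nonneg h0.le hc
  have hd' := mul_nonneg h0.le hd
  have ha' := mul_nonneg h0.le ha
  cases p <;> simp only [Cone, Position.next, letter, simpleReflection] at h ⊢ <;>
    refine ⟨⟨?_, ?_, ?_, ?_⟩, ?_⟩ <;> (try refine ⟨?_, ?_⟩) <;> (try refine ⟨?_, ?_⟩) <;>
    nlinarith

end Position

/-- The simple root of a generator. -/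
def simpleRoot : Fin 4 → ℝ × ℝ × ℝ × ℝ
  | 0 => (1, 0, 0, 0)
  | 1 => (0, 1, 0, 0)
  | 2 => (0, 0, 1, 0)
  | 3 => (0, 0, 0, 1)

theorem simpleReflection_simpleRoot (ψ : ℝ) (i : Fin 4) :
    simpleReflection ψ i (simpleRoot i) = -simpleRoot i := by
  fin_cases i <;> simp [simpleReflection, simpleRoot]

theorem simpleRoot_ne_zero (i : Fin 4) : simpleRoot i ≠ 0 := by
  fin_cases i <;> simp [simpleRoot]

namespace Position

theorem cone_simpleRoot {ψ : ℝ} (h0 : 0 < ψ) {p : Position} {i : Fin 4} (h : i ∉ p.heads) :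
    p.Cone ψ (simpleRoot i) := by
  cases p <;> fin_cases i <;> simp [heads, letter] at h <;> simp [Cone, simpleRoot] <;> linarith

theorem letter_notMem_heads_next (p : Position) : p.letter ∉ p.next.heads := by
  cases p <;> simp [letter, next, heads]

theorem Reads.not_map_eq_neg {W : Type*} [Group W] {M : CoxeterMatrix (Fin 4)}
    {cs : CoxeterSystem M W} {ψ : ℝ} (h0 : 0 < ψ) (hψ : ψ ^ 2 = 1 - ψ)
    {ρ : W →* Function.End (ℝ × ℝ × ℝ × ℝ)} (hρ : ∀ i, ρ (cs.simple i) = simpleReflection ψ i)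
    {p : Position} {l : List (Fin 4)} (hl : p.Reads l) {v : ℝ × ℝ × ℝ × ℝ} (hv : p.Cone ψ v)
    (hv0 : v ≠ 0) : ∀ t ∈ cs.leftInvSeq l, ρ t v ≠ -v := by
  induction hl generalizing v with
  | nil => simp [leftInvSeq]
  | @cons p l _ ih =>
    have hnext := hv.next h0 hψ
    intro t ht h
    rw [leftInvSeq, List.mem_cons, List.mem_map] at ht
    rcases ht with rfl | ⟨t, ht, rfl⟩
    · rw [hρ] at h
      rw [h] at hnext
      exact hv0 (le_antisymm (neg_nonneg.mp hnext.nonneg) hv.nonneg)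
    · refine ih hnext (fun h' => hv0 ?_) t ht ?_
      · rw [← simpleReflection_simpleReflection ψ p.letter v, h']
        have := simpleReflection_neg ψ p.letter 0
        rw [neg_zero] at this
        exact self_eq_neg.mp this
      · rw [← simpleReflection_neg, ← h, MulAut.conj_apply, inv_simple, map_mul, map_mul, hρ]
        exact (simpleReflection_simpleReflection ψ p.letter _).symm

/-- No letter outside `heads` is a left descent of a word read from a position. -/
theorem Reads.simple_notMem_leftInvSeq {W : Type*} [Group W] {M : CoxeterMatrix (Fin 4)}
    (cs : CoxeterSystem M W) (hab : M 0 1 = 3) (hbc : M 1 2 = 5) (hcd : M 2 3 = 3)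
    (hac : M 0 2 = 2) (had : M 0 3 = 2) (hbd : M 1 3 = 2) {p : Position} {l : List (Fin 4)}
    (hl : p.Reads l) {i : Fin 4} (hi : i ∉ p.heads) : cs.simple i ∉ cs.leftInvSeq l := by
  obtain ⟨ψ, h0, hψ⟩ : ∃ ψ : ℝ, 0 < ψ ∧ ψ ^ 2 = 1 - ψ :=
    ⟨-Real.goldenConj, neg_pos.mpr Real.goldenConj_neg, by
      rw [neg_sq, Real.goldenConj_sq]; ring⟩
  have hlift := isLiftable_simpleReflection hab hbc hcd hac had hbd hψ
  intro h
  refine hl.not_map_eq_neg h0 hψ (ρ := cs.lift ⟨_, hlift⟩) (fun i => cs.lift_apply_simple hlift i)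
    (cone_simpleRoot h0 hi) (simpleRoot_ne_zero i) _ h ?_
  rw [cs.lift_apply_simple hlift, simpleReflection_simpleRoot]

theorem Reads.isReduced {W : Type*} [Group W] {M : CoxeterMatrix (Fin 4)}
    (cs : CoxeterSystem M W) (hab : M 0 1 = 3) (hbc : M 1 2 = 5) (hcd : M 2 3 = 3)
    (hac : M 0 2 = 2) (had : M 0 3 = 2) (hbd : M 1 3 = 2) {p : Position} {l : List (Fin 4)}
    (hl : p.Reads l) : cs.IsReduced l := by
  induction hl with
  | nil => simp [CoxeterSystem.IsReduced]
  | @cons p l hl ih =>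
    exact ih.cons cs
      (hl.simple_notMem_leftInvSeq cs hab hbc hcd hac had hbd p.letter_notMem_heads_next)

theorem Reads.exists_commEquiv_cons {M : CoxeterMatrix (Fin 4)} (hac : M 0 2 = 2) (hbd : M 1 3 = 2)
    {p : Position} {l : List (Fin 4)} (hl : p.Reads l) (hne : l ≠ []) {i : Fin 4}
    (hi : i ∈ p.heads) : ∃ (q : Position) (m : List (Fin 4)), q.Reads m ∧
      CommEquiv M l (i :: m) := by
  cases hl with
  | nil => exact absurd rfl hne
  | @cons _ l hl =>
    by_cases hp : i = p.letter
    · exact ⟨p.next, l, hl, hp ▸ .refl⟩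
    cases p with
    | acbc =>
      obtain rfl : i = 2 := (show i = 0 ∨ i = 2 by simpa [heads] using hi).resolve_left hp
      cases hl with
      | nil h => exact h.elim
      | cons hl => exact ⟨abcb, _, .cons hl, .swap hac _⟩
    | bdcb =>
      obtain rfl : i = 3 := (show i = 1 ∨ i = 3 by simpa [heads] using hi).resolve_left hp
      cases hl with
      | nil h => exact h.elim
      | cons hl => exact ⟨bcba, _, .cons hl, .swap hbd _⟩
    | _ => exact absurd (List.mem_singleton.mp hi) hp

theorem Reads.commEquiv {W : Type*} [Group W] {M : CoxeterMatrix (Fin 4)}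
    (cs : CoxeterSystem M W) (hab : M 0 1 = 3) (hbc : M 1 2 = 5) (hcd : M 2 3 = 3)
    (hac : M 0 2 = 2) (had : M 0 3 = 2) (hbd : M 1 3 = 2) {p : Position} {l : List (Fin 4)}
    (hl : p.Reads l) {l' : List (Fin 4)} (hl' : cs.IsReduced l')
    (h : cs.wordProd l' = cs.wordProd l) : CommEquiv M l l' := by
  have hlr := hl.isReduced cs hab hbc hcd hac had hbd
  induction l' generalizing p l with
  | nil =>
    rw [CoxeterSystem.IsReduced, ← h, wordProd_nil, length_one, eq_comm,
      List.length_eq_zero_iff] at hlr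
    exact hlr ▸ .refl
  | cons i l' ih =>
    have hi := hl'.simple_mem_leftInvSeq cs h
    have hne : l ≠ [] := by
      rintro rfl
      simp [leftInvSeq] at hi
    have hi' : i ∈ p.heads := by
      by_contra hn
      exact hl.simple_notMem_leftInvSeq cs hab hbc hcd hac had hbd hn hi
    obtain ⟨q, m, hm, hlm⟩ := hl.exists_commEquiv_cons hac hbd hne hi'
    rw [hlm.wordProd_eq cs, wordProd_cons, wordProd_cons, mul_right_inj] at h
    exact hlm.trans ((ih hm (hl'.drop 1) h (hm.isReduced cs hab hbc hcd hac had hbd)).cons i)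

theorem reads_flatten_ofFn (k : ℕ) :
    acbc.Reads (List.ofFn fun i : Fin k =>
      if (i : ℕ) % 2 = 0 then ([0, 2, 1, 2] : List (Fin 4)) else [1, 3, 2, 1]).flatten ∧
    bdcb.Reads (List.ofFn fun i : Fin k =>
      if ((i : ℕ) + 1) % 2 = 0 then ([0, 2, 1, 2] : List (Fin 4)) else [1, 3, 2, 1]).flatten := by
  induction k with
  | zero => exact ⟨.nil trivial, .nil trivial⟩
  | succ k ih =>
    constructor
    · rw [List.ofFn_succ, List.flatten_cons]
      exact .cons (.cons (.cons (.cons ih.2)))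
    · rw [List.ofFn_succ, List.flatten_cons]
      simp only [Fin.val_succ, add_assoc, Nat.reduceAdd, Nat.add_mod_right]
      exact .cons (.cons (.cons (.cons ih.1)))

end Position

end Reflections

/-- in the Coxeter group with diagram `a—b—c—d`, `m(b,c) = 5`,
`m(a,b) = m(c,d) = 3` and all other pairs commuting, the word
`w_k = (acbc)(bdcb)(acbc)⋯` with `k` total factors is a reduced word of a fully
commutative element for every `k ≥ 0`. -/
theorem stmt13 {W : Type*} [Group W] {M : CoxeterMatrix (Fin 4)} (cs : CoxeterSystem M W)
    (hab : M 0 1 = 3) (hbc : M 1 2 = 5) (hcd : M 2 3 = 3)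
    (hac : M 0 2 = 2) (had : M 0 3 = 2) (hbd : M 1 3 = 2) (k : ℕ) :
    cs.IsReduced (wWord k) ∧ FullyCommutative cs (cs.wordProd (wWord k)) := by
  have h : Position.acbc.Reads (wWord k) := (Position.reads_flatten_ofFn k).1
  refine ⟨h.isReduced cs hab hbc hcd hac had hbd, fun l l' hl hp hl' hp' => ?_⟩
  exact (h.commEquiv cs hab hbc hcd hac had hbd hl hp).symm.trans
    (h.commEquiv cs hab hbc hcd hac had hbd hl' hp')
end
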